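/- arXiv:1301.1872 — 2 statements merged into one kernel-verified Lean document; each statement's English description precedes it below -/
import Mathlib

section
/- Let n ≥ 2 and let Q_{R̄} ⊆ ℝ^{n+1} be a parabolic cylinder. Assume X ⊆ Y ⊆ Q_{R̄} are measurable sets and 0 < δ < 1 are such that: (i) |X| < δ |Q_{R̄}|; and (ii) for all (x,t) ∈ Q_{R̄} and all ρ ∈ (0, R̄], if |X ∩ Q_ρ(x,t)| ≥ δ |Q_ρ(x,t)| then Q_ρ(x,t) ∩ Q_{R̄} ⊆ Y. Then |X| ≤ c₃ δ |Y| for a constant c₃ depending only on n. -/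
open MeasureTheory Set ENNReal

/-- The (backward) parabolic cylinder `Q_R(x₀,t₀) = B(x₀,R) × (t₀ - R², t₀) ⊆ ℝⁿ × ℝ`. -/
def parabolicCylinder (n : ℕ) (x₀ : EuclideanSpace ℝ (Fin n)) (t₀ R : ℝ) :
    Set (EuclideanSpace ℝ (Fin n) × ℝ) :=
  (Metric.ball x₀ R) ×ˢ (Set.Ioo (t₀ - R ^ 2) t₀)

/-!
Let `Q₀ = Q_{R̄}`, and call a cylinder dense if more than a fraction `δ` of its measure lies in
`X`. Parabolic cylinders are halves of balls for the metric `max |x - y| (|t - s| ^ (1 / 2))`,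
for which Lebesgue measure is doubling, so by the density theorem almost every point of `X` lies
in a dense cylinder centred in the base of `Q₀` whose time interval stays in that of `Q₀`. Among
these choose one, `Q_ρ`, of almost maximal radius. The enlargement `Q_ρ*` that the Vitali
covering lemma produces, intersected with `Q₀`, fits into a cylinder of radius `5ρ` of the same
kind, which is too large to be dense, whence `|X ∩ Q_ρ*| ≤ 5 ^ (n + 2) δ |Q_ρ|`; when `5ρ`
exceeds the radius of `Q₀`, the hypothesis `|X| < δ |Q₀|` gives the same bound. Moreover `|Q_ρ| ≤
2 ^ n |Q_ρ ∩ Q₀|`, because a ball of radius `ρ` centred in the base of `Q₀` contains a ball of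
radius `ρ / 2` that also lies in that base. As `Q_ρ ∩ Q₀ ⊆ Y`, summing over a disjoint Vitali
subfamily gives the claim.
-/

open Filter Metric Module
open scoped Topology

/-- The data of a backward parabolic cylinder over a space `E`: the centre and radius of its base,
and the time at its top, which is the supremum of its open time interval. -/
structure BackwardCylinder (E : Type*) where
  center : E
  top : ℝ
  radius : ℝ

namespace BackwardCylinder

variable {E : Type*}

section PseudoMetricSpace

variable [PseudoMetricSpace E] {P Q Q₀ : BackwardCylinder E}

/-- The space-time region occupied by a cylinder. -/
def toSet (Q : BackwardCylinder E) : Set (E × ℝ) :=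
  ball Q.center Q.radius ×ˢ Ioo (Q.top - Q.radius ^ 2) Q.top

/-- The enlargement of a cylinder for the Vitali covering lemma: it contains every cylinder that
meets `Q` and has at most twice its radius. -/
def enlargement (Q : BackwardCylinder E) : Set (E × ℝ) :=
  ball Q.center (5 * Q.radius) ×ˢ Ioo (Q.top - 5 * Q.radius ^ 2) (Q.top + 4 * Q.radius ^ 2)

lemma isOpen_toSet (Q : BackwardCylinder E) : IsOpen Q.toSet :=
  isOpen_ball.prod isOpen_Ioo

lemma measurableSet_toSet [MeasurableSpace E] [OpensMeasurableSpace E] (Q : BackwardCylinder E) :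
    MeasurableSet Q.toSet :=
  measurableSet_ball.prod measurableSet_Ioo

lemma nonempty_toSet (hQ : 0 < Q.radius) : Q.toSet.Nonempty :=
  (nonempty_ball.2 hQ).prod <| nonempty_Ioo.2 <| sub_lt_self _ (by positivity)

lemma toSet_subset_enlargement (h : (P.toSet ∩ Q.toSet).Nonempty)
    (hPQ : P.radius ≤ 2 * Q.radius) : P.toSet ⊆ Q.enlargement := by
  obtain ⟨⟨y, s⟩, ⟨hyP, hsP⟩, hyQ, hsQ⟩ := h
  have hP : 0 < P.radius := pos_of_mem_ball hyP
  have hsq : P.radius ^ 2 ≤ 4 * Q.radius ^ 2 := by nlinarith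
  rintro ⟨z, τ⟩ ⟨hz, hτ⟩
  simp only [mem_ball, mem_Ioo] at hyP hyQ hsP hsQ hz hτ
  refine ⟨?_, by linarith, by linarith⟩
  calc dist z Q.center ≤ dist z P.center + dist P.center y + dist y Q.center :=
        dist_triangle4 ..
    _ < 5 * Q.radius := by rw [dist_comm P.center y]; linarith

/-- The cylinders of the covering argument: centred in the base of `Q₀`, with a time interval inside
that of `Q₀`. The base need not be contained in that of `Q₀`. -/
structure IsAnchored (Q₀ Q : BackwardCylinder E) : Prop where
  radius_pos : 0 < Q.radius
  center_mem : Q.center ∈ ball Q₀.center Q₀.radius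
  bottom_le : Q₀.top - Q₀.radius ^ 2 ≤ Q.top - Q.radius ^ 2
  top_le : Q.top ≤ Q₀.top

lemma IsAnchored.radius_le (h : IsAnchored Q₀ Q) : Q.radius ≤ Q₀.radius :=
  le_of_sq_le_sq (by linarith [h.bottom_le, h.top_le]) (pos_of_mem_ball h.center_mem).le

lemma exists_isAnchored_enlargement_inter_subset (hQ : 0 < Q.radius)
    (hcenter : Q.center ∈ ball Q₀.center Q₀.radius) (hle : 5 * Q.radius ≤ Q₀.radius) :
    ∃ P, IsAnchored Q₀ P ∧ P.radius = 5 * Q.radius ∧ Q.enlargement ∩ Q₀.toSet ⊆ P.toSet := by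
  have hsq : (5 * Q.radius) ^ 2 ≤ Q₀.radius ^ 2 := by gcongr
  set m := min (Q.top + 4 * Q.radius ^ 2) Q₀.top
  set s := max (Q₀.top - Q₀.radius ^ 2 + (5 * Q.radius) ^ 2) m
  refine ⟨⟨Q.center, s, 5 * Q.radius⟩, ⟨by positivity, hcenter, ?_, ?_⟩, rfl, ?_⟩
  · linarith [le_max_left (Q₀.top - Q₀.radius ^ 2 + (5 * Q.radius) ^ 2) m]
  · exact max_le (by linarith) (min_le_right _ _)
  · rintro ⟨y, τ⟩ ⟨⟨hy, hτ⟩, -, hτ₀⟩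
    have hτm : τ < m := lt_min hτ.2 hτ₀.2
    have hms : m ≤ Q.top + 4 * Q.radius ^ 2 := min_le_left _ _
    have hsτ : s < τ + (5 * Q.radius) ^ 2 := max_lt (by linarith [hτ₀.1]) (by nlinarith [hτ.1])
    exact ⟨hy, sub_lt_iff_lt_add.2 hsτ, hτm.trans_le (le_max_right _ _)⟩

lemma exists_subfamily_pairwiseDisjoint_subset_enlargement [TopologicalSpace.SeparableSpace E]
    {F : Set (BackwardCylinder E)} {R : ℝ} (hpos : ∀ Q ∈ F, 0 < Q.radius)
    (hR : ∀ Q ∈ F, Q.radius ≤ R) :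
    ∃ u ⊆ F, u.Countable ∧ u.PairwiseDisjoint toSet ∧
      ∀ P ∈ F, ∃ Q ∈ u, P.toSet ⊆ Q.enlargement := by
  obtain ⟨u, huF, hdisj, hcover⟩ := Vitali.exists_disjoint_subfamily_covering_enlargement
    toSet F radius 2 one_lt_two (fun Q hQ ↦ (hpos Q hQ).le) R hR
    fun Q hQ ↦ nonempty_toSet (hpos Q hQ)
  refine ⟨u, huF, hdisj.countable_of_isOpen (fun Q _ ↦ Q.isOpen_toSet)
    fun Q hQ ↦ nonempty_toSet (hpos Q (huF hQ)), hdisj, fun P hP ↦ ?_⟩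
  obtain ⟨Q, hQ, hmeet, hle⟩ := hcover P hP
  exact ⟨Q, hQ, toSet_subset_enlargement hmeet hle⟩

lemma exists_top_mem_Ioo_lt_measure_inter [MeasurableSpace E] {ν : Measure (E × ℝ)} {c : ℝ≥0∞}
    {X : Set (E × ℝ)} (h : c < ν (X ∩ Q.toSet)) {s : ℝ} (hs : s < Q.top) :
    ∃ t ∈ Ioo s Q.top, c < ν (X ∩ toSet { Q with top := t }) := by
  obtain ⟨u, hu, hus, hlim⟩ := exists_seq_strictMono_tendsto' hs
  let A (k : ℕ) : Set (E × ℝ) :=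
    X ∩ ball Q.center Q.radius ×ˢ Ioo (Q.top - Q.radius ^ 2) (u k)
  have hA : Monotone A := fun k l hkl ↦ inter_subset_inter_right X <|
    prod_mono_right <| Ioo_subset_Ioo_right (hu.monotone hkl)
  have hQA : X ∩ Q.toSet ⊆ ⋃ k, A k := by
    rintro ⟨y, τ⟩ ⟨hX, hy, hτ⟩
    obtain ⟨k, hk⟩ := (hlim.eventually_const_lt hτ.2).exists
    exact mem_iUnion.2 ⟨k, hX, hy, hτ.1, hk⟩
  have hlt := h.trans_le (measure_mono hQA)
  rw [hA.measure_iUnion, lt_iSup_iff] at hlt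
  obtain ⟨k, hk⟩ := hlt
  refine ⟨u k, hus k, hk.trans_le <| measure_mono <| inter_subset_inter_right X ?_⟩
  exact prod_mono_right <| Ioo_subset_Ioo_left (sub_le_sub_right (hus k).2.le _)

end PseudoMetricSpace

end BackwardCylinder

section Parabolic

/-- The time axis with the metric `|t - s| ^ (1 / 2)`. -/
abbrev ParabolicTime : Type :=
  Snowflaking ℝ (1 / 2) one_half_pos one_half_lt_one.le

noncomputable instance : MeasurableSpace ParabolicTime := borel ParabolicTime

instance : BorelSpace ParabolicTime := ⟨rfl⟩

/-- The identity map onto space-time with its parabolic metric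
`max (dist x y) (|t - s| ^ (1 / 2))`, whose balls are two-sided parabolic cylinders. -/
noncomputable def toParabolic (E : Type*) [TopologicalSpace E] : E × ℝ ≃ₜ E × ParabolicTime :=
  (Homeomorph.refl E).prodCongr Snowflaking.homeomorph.symm

lemma toParabolic_preimage_closedBall {E : Type*} [PseudoMetricSpace E] (z : E × ℝ) {r : ℝ}
    (hr : 0 ≤ r) :
    toParabolic E ⁻¹' closedBall (toParabolic E z) r =
      closedBall z.1 r ×ˢ closedBall z.2 (r ^ 2) := by
  ext w
  change max (dist w.1 z.1) (dist (Snowflaking.toSnowflaking w.2 : ParabolicTime)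
    (Snowflaking.toSnowflaking z.2)) ≤ r ↔ dist w.1 z.1 ≤ r ∧ dist w.2 z.2 ≤ r ^ 2
  rw [max_le_iff, Snowflaking.dist_toSnowflaking_toSnowflaking, ← Real.sqrt_eq_rpow,
    Real.sqrt_le_left hr]

/-- The product of `μ` with Lebesgue measure in time, transported to the parabolic metric. -/
noncomputable def parabolicMeasure {E : Type*} [TopologicalSpace E] [MeasurableSpace E]
    (μ : Measure E) : Measure (E × ParabolicTime) :=
  (μ.prod volume).map (toParabolic E)

lemma parabolicMeasure_apply {E : Type*} [TopologicalSpace E] [MeasurableSpace E] [BorelSpace E]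
    (μ : Measure E) (S : Set (E × ParabolicTime)) :
    parabolicMeasure μ S = μ.prod volume (toParabolic E ⁻¹' S) :=
  (toParabolic E).toMeasurableEquiv.map_apply S

end Parabolic

lemma lt_measure_inter_of_measure_eq_two_mul {α : Type*} [MeasurableSpace α] {ν : Measure α}
    {X S T : Set α} {δ : ℝ≥0∞} (hS : MeasurableSet S) (hST : S ⊆ T) (hT : ν T = 2 * ν S)
    (hfin : ν S ≠ ∞) (h : (1 + δ) / 2 * ν T < ν (X ∩ T)) : δ * ν S < ν (X ∩ S) := by
  have hsdiff : ν (T \ S) = ν S := by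
    rw [measure_sdiff hST hS.nullMeasurableSet hfin, hT, two_mul,
      ENNReal.add_sub_cancel_right hfin]
  have hunion : X ∩ T ⊆ X ∩ S ∪ T \ S := by
    intro w hw
    by_cases hwS : w ∈ S
    exacts [Or.inl ⟨hw.1, hwS⟩, Or.inr ⟨hw.2, hwS⟩]
  refine lt_of_add_lt_add_right (a := ν S) ?_
  calc δ * ν S + ν S = (1 + δ) / 2 * ν T := by
        rw [hT, ← mul_assoc, ENNReal.div_mul_cancel two_ne_zero ofNat_ne_top]; ring
    _ < ν (X ∩ T) := h
    _ ≤ ν (X ∩ S) + ν (T \ S) := (measure_mono hunion).trans (measure_union_le _ _)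
    _ = ν (X ∩ S) + ν S := by rw [hsdiff]

lemma exists_mem_forall_le_mul {α : Type*} {S : Set α} {f : α → ℝ} {c : ℝ} (hc : 1 < c)
    (hne : S.Nonempty) (hbdd : BddAbove (f '' S)) (hpos : ∀ a ∈ S, 0 < f a) :
    ∃ a ∈ S, ∀ b ∈ S, f b ≤ c * f a := by
  obtain ⟨a₀, ha₀⟩ := hne
  have hsup : 0 < sSup (f '' S) := (hpos a₀ ha₀).trans_le (le_csSup hbdd ⟨a₀, ha₀, rfl⟩)
  obtain ⟨_, ⟨a, ha, rfl⟩, hlt⟩ :=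
    exists_lt_of_lt_csSup (nonempty_of_mem (mem_image_of_mem f ha₀)) (div_lt_self hsup hc)
  rw [div_lt_iff₀' (by positivity)] at hlt
  exact ⟨a, ha, fun b hb ↦ (le_csSup hbdd ⟨b, hb, rfl⟩).trans hlt.le⟩

lemma exists_ball_half_subset_inter_ball {E : Type*} [SeminormedAddCommGroup E] [NormedSpace ℝ E]
    {x x₀ : E} {ρ R : ℝ} (hx : x ∈ ball x₀ R) (hρ : 0 ≤ ρ) (hρR : ρ ≤ R) :
    ∃ y, ball y (ρ / 2) ⊆ ball x ρ ∩ ball x₀ R := by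
  have hR : 0 < R := pos_of_mem_ball hx
  set k := ρ / (2 * R) with hk
  have hkR : k * R = ρ / 2 := by rw [hk]; field_simp
  have hk₀ : 0 ≤ k := by positivity
  have hk₁ : k ≤ 1 := by rw [hk, div_le_one (by positivity)]; linarith
  have hdist : dist x x₀ ≤ R := (mem_ball.1 hx).le
  refine ⟨AffineMap.lineMap x x₀ k, subset_inter (ball_subset_ball' ?_) (ball_subset_ball' ?_)⟩
  · rw [dist_lineMap_left, Real.norm_of_nonneg hk₀]
    nlinarith
  · rw [dist_lineMap_right, Real.norm_of_nonneg (sub_nonneg.2 hk₁)]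
    nlinarith

section Haar

variable {E : Type*} [NormedAddCommGroup E] [NormedSpace ℝ E] [FiniteDimensional ℝ E]
  [MeasurableSpace E] [BorelSpace E] {μ : Measure E} [μ.IsAddHaarMeasure]

namespace BackwardCylinder

variable {P Q Q₀ : BackwardCylinder E}

lemma measure_toSet (μ : Measure E) [μ.IsAddHaarMeasure] (hQ : 0 < Q.radius) :
    μ.prod volume Q.toSet = .ofReal (Q.radius ^ (finrank ℝ E + 2)) * μ (ball 0 1) := by
  rw [toSet, Measure.prod_prod, Measure.addHaar_ball_of_pos _ _ hQ, Real.volume_Ioo, pow_add,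
    ENNReal.ofReal_mul (by positivity), _root_.sub_sub_cancel, mul_right_comm]

lemma measure_toSet_ne_top (hQ : 0 < Q.radius) : μ.prod volume Q.toSet ≠ ∞ := by
  rw [measure_toSet μ hQ]
  exact mul_ne_top ofReal_ne_top measure_ball_lt_top.ne

lemma measure_toSet_eq_mul (μ : Measure E) [μ.IsAddHaarMeasure] {c : ℝ} (hc : 0 < c)
    (hQ : 0 < Q.radius) (h : P.radius = c * Q.radius) :
    μ.prod volume P.toSet = .ofReal (c ^ (finrank ℝ E + 2)) * μ.prod volume Q.toSet := by
  rw [measure_toSet μ (by rw [h]; positivity), measure_toSet μ hQ, h, mul_pow,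
    ENNReal.ofReal_mul (by positivity), mul_assoc]

lemma measure_toSet_mono (μ : Measure E) [μ.IsAddHaarMeasure] (hQ : 0 < Q.radius)
    (h : Q.radius ≤ P.radius) : μ.prod volume Q.toSet ≤ μ.prod volume P.toSet := by
  rw [measure_toSet μ hQ, measure_toSet μ (hQ.trans_le h)]
  gcongr

lemma IsAnchored.measure_toSet_le (h : IsAnchored Q₀ Q) :
    μ.prod volume Q.toSet ≤ 2 ^ finrank ℝ E * μ.prod volume (Q.toSet ∩ Q₀.toSet) := by
  obtain ⟨y, hy⟩ := exists_ball_half_subset_inter_ball h.center_mem h.radius_pos.le h.radius_le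
  have hsub : ball y (Q.radius / 2) ×ˢ Ioo (Q.top - Q.radius ^ 2) Q.top ⊆
      Q.toSet ∩ Q₀.toSet := by
    rw [toSet, toSet, prod_inter_prod]
    exact prod_mono hy (subset_inter subset_rfl (Ioo_subset_Ioo h.bottom_le h.top_le))
  have hball : μ (ball Q.center Q.radius) = 2 ^ finrank ℝ E * μ (ball y (Q.radius / 2)) := by
    rw [← mul_div_cancel₀ Q.radius two_ne_zero, Measure.addHaar_ball_mul_of_pos _ _ two_pos,
      mul_div_cancel₀ _ two_ne_zero, Measure.addHaar_ball_center _ y,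
      ENNReal.ofReal_pow zero_le_two, ofReal_ofNat]
  calc μ.prod volume Q.toSet = 2 ^ finrank ℝ E *
        μ.prod volume (ball y (Q.radius / 2) ×ˢ Ioo (Q.top - Q.radius ^ 2) Q.top) := by
        rw [toSet, Measure.prod_prod, Measure.prod_prod, hball, mul_assoc]
    _ ≤ 2 ^ finrank ℝ E * μ.prod volume (Q.toSet ∩ Q₀.toSet) := by gcongr

end BackwardCylinder

lemma parabolicMeasure_closedBall (μ : Measure E) [μ.IsAddHaarMeasure] (z : E × ParabolicTime)
    {Q : BackwardCylinder E} (hQ : 0 < Q.radius) :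
    parabolicMeasure μ (closedBall z Q.radius) = 2 * μ.prod volume Q.toSet := by
  obtain ⟨z, rfl⟩ := (toParabolic E).surjective z
  rw [parabolicMeasure_apply, toParabolic_preimage_closedBall z hQ.le, Measure.prod_prod,
    Measure.addHaar_closedBall _ _ hQ.le, Real.volume_closedBall, Q.measure_toSet μ hQ, pow_add,
    ENNReal.ofReal_mul zero_le_two, ENNReal.ofReal_mul (by positivity), ofReal_ofNat]
  ring

instance : IsUnifLocDoublingMeasure (parabolicMeasure μ) := by
  refine ⟨⟨2 ^ (finrank ℝ E + 2), ?_⟩⟩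
  filter_upwards [self_mem_nhdsWithin] with r (hr : 0 < r) z
  have hmul := BackwardCylinder.measure_toSet_eq_mul μ two_pos (P := ⟨0, 0, 2 * r⟩)
    (Q := ⟨0, 0, r⟩) hr rfl
  rw [parabolicMeasure_closedBall μ z (Q := ⟨0, 0, r⟩) hr,
    parabolicMeasure_closedBall μ z (Q := ⟨0, 0, 2 * r⟩) (by positivity), hmul,
    ENNReal.ofReal_pow zero_le_two, ofReal_ofNat]
  push_cast
  exact (mul_left_comm ..).le

instance : IsLocallyFiniteMeasure (parabolicMeasure μ) := by
  refine ⟨fun z ↦ ⟨closedBall z 1, closedBall_mem_nhds z one_pos, ?_⟩⟩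
  rw [parabolicMeasure_closedBall μ z (Q := ⟨0, 0, 1⟩) one_pos]
  exact mul_lt_top ofNat_lt_top
    (BackwardCylinder.measure_toSet_ne_top (Q := ⟨0, 0, 1⟩) one_pos).lt_top

namespace BackwardCylinder

variable {Q Q₀ : BackwardCylinder E} {X : Set (E × ℝ)} {δ : ℝ≥0∞}

lemma ae_eventually_lt_measure_inter (μ : Measure E) [μ.IsAddHaarMeasure] (X : Set (E × ℝ))
    (hδ : δ < 1) :
    ∀ᵐ z ∂μ.prod volume, z ∈ X → ∀ᶠ r in 𝓝[>] (0 : ℝ),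
      δ * μ.prod volume (toSet ⟨z.1, z.2 + r ^ 2 / 2, r⟩) <
        μ.prod volume (X ∩ toSet ⟨z.1, z.2 + r ^ 2 / 2, r⟩) := by
  have hdensity := ae_imp_of_ae_restrict <| IsUnifLocDoublingMeasure.ae_tendsto_measure_inter_div
    (parabolicMeasure μ) ((toParabolic E).symm ⁻¹' X) 1
  filter_upwards [ae_of_ae_map (toParabolic E).measurable.aemeasurable hdensity] with z hz hzX
  have hlim := hz (by simpa using hzX) (fun _ ↦ toParabolic E z) id tendsto_id <| by
    filter_upwards [self_mem_nhdsWithin] with r (hr : 0 < r)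
    exact mem_closedBall_self (by simpa using hr.le)
  have hhalf : (1 + δ) / 2 < 1 := by
    rw [ENNReal.div_lt_iff (by simp) (by simp), one_mul, ← one_add_one_eq_two]
    exact ENNReal.add_lt_add_left one_ne_top hδ
  filter_upwards [hlim.eventually_const_lt hhalf, self_mem_nhdsWithin] with r hlt (hr : 0 < r)
  set Q : BackwardCylinder E := ⟨z.1, z.2 + r ^ 2 / 2, r⟩
  have hball : toParabolic E ⁻¹' closedBall (toParabolic E z) r =
      closedBall z.1 r ×ˢ closedBall z.2 (r ^ 2) := toParabolic_preimage_closedBall z hr.le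
  have htwo := parabolicMeasure_closedBall μ (toParabolic E z) (Q := Q) hr
  have hsub : Q.toSet ⊆ closedBall z.1 r ×ˢ closedBall z.2 (r ^ 2) := by
    rw [Real.closedBall_eq_Icc]
    exact prod_mono ball_subset_closedBall <| Ioo_subset_Icc_self.trans <|
      Icc_subset_Icc (by simp only [Q]; nlinarith) (by simp only [Q]; nlinarith)
  refine lt_measure_inter_of_measure_eq_two_mul Q.measurableSet_toSet hsub ?_
    (measure_toSet_ne_top hr) ?_
  · rw [← htwo, parabolicMeasure_apply, hball]
  · have := ENNReal.mul_lt_of_lt_div hlt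
    simpa only [id, parabolicMeasure_apply, preimage_inter, hball, ← preimage_comp,
      Homeomorph.symm_comp_self, preimage_id] using this

/-- The cylinders anchored in `Q₀` with more than a fraction `δ` of their measure in `X`. -/
def denseFamily (μ : Measure E) (Q₀ : BackwardCylinder E) (X : Set (E × ℝ)) (δ : ℝ≥0∞) :
    Set (BackwardCylinder E) :=
  {Q | IsAnchored Q₀ Q ∧ δ * μ.prod volume Q.toSet < μ.prod volume (X ∩ Q.toSet)}

/-- The dense cylinders at which the stopping-time argument ends: the enlargement carries at most
the fraction `δ` of the measure of a cylinder of five times the radius. -/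
def stoppingFamily (μ : Measure E) (Q₀ : BackwardCylinder E) (X : Set (E × ℝ)) (δ : ℝ≥0∞) :
    Set (BackwardCylinder E) :=
  {Q ∈ denseFamily μ Q₀ X δ | μ.prod volume (X ∩ Q.enlargement) ≤
    δ * (5 ^ (finrank ℝ E + 2) * μ.prod volume Q.toSet)}

lemma ae_exists_mem_denseFamily (μ : Measure E) [μ.IsAddHaarMeasure] (hX : X ⊆ Q₀.toSet)
    (hδ : δ < 1) :
    ∀ᵐ z ∂μ.prod volume, z ∈ X → ∃ Q ∈ denseFamily μ Q₀ X δ, z ∈ Q.toSet := by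
  filter_upwards [ae_eventually_lt_measure_inter μ X hδ] with z hz hzX
  obtain ⟨hcenter, hbot, htop⟩ := hX hzX
  have hsmall : ∀ᶠ r : ℝ in 𝓝[>] 0,
      r ^ 2 / 2 < min (Q₀.top - z.2) (z.2 - (Q₀.top - Q₀.radius ^ 2)) := by
    have hcont : Tendsto (fun r : ℝ ↦ r ^ 2 / 2) (𝓝 0) (𝓝 0) :=
      Continuous.tendsto' (by fun_prop) _ _ (by norm_num)
    exact nhdsWithin_le_nhds <|
      hcont.eventually_lt_const (lt_min (sub_pos.2 htop) (sub_pos.2 hbot))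
  obtain ⟨r, hdense, hr, hr₀⟩ := ((hz hzX).and (hsmall.and self_mem_nhdsWithin)).exists
  replace hr₀ : 0 < r := hr₀
  have hsq : 0 < r ^ 2 := by positivity
  rw [lt_min_iff] at hr
  exact ⟨⟨z.1, z.2 + r ^ 2 / 2, r⟩,
    ⟨⟨hr₀, hcenter, by simp only; linarith, by simp only; linarith⟩, hdense⟩,
    mem_ball_self hr₀, by simp only; linarith, by simp only; linarith⟩

lemma measure_inter_enlargement_le (hX : X ⊆ Q₀.toSet)
    (hXδ : μ.prod volume X ≤ δ * μ.prod volume Q₀.toSet) (hQ : IsAnchored Q₀ Q)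
    (hmax : ∀ P ∈ denseFamily μ Q₀ X δ, Q.toSet ∩ Q₀.toSet ⊆ P.toSet →
      P.radius ≤ 2 * Q.radius) :
    μ.prod volume (X ∩ Q.enlargement) ≤
      δ * (5 ^ (finrank ℝ E + 2) * μ.prod volume Q.toSet) := by
  have hr := hQ.radius_pos
  have hfive : ∀ P : BackwardCylinder E, P.radius = 5 * Q.radius →
      μ.prod volume P.toSet = 5 ^ (finrank ℝ E + 2) * μ.prod volume Q.toSet := fun P hP ↦ by
    rw [measure_toSet_eq_mul μ (by norm_num) hr hP, ENNReal.ofReal_pow (by norm_num), ofReal_ofNat]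
  rcases le_or_gt (5 * Q.radius) Q₀.radius with hle | hlt
  · obtain ⟨P, hP, hPQ, hsub⟩ :=
      exists_isAnchored_enlargement_inter_subset hr hQ.center_mem hle
    have hQself : Q.toSet ⊆ Q.enlargement :=
      toSet_subset_enlargement (by simpa using nonempty_toSet hr) (by linarith)
    have hnot : P ∉ denseFamily μ Q₀ X δ := fun hdense ↦ by
      have := hmax P hdense ((inter_subset_inter_left _ hQself).trans hsub)
      linarith
    calc μ.prod volume (X ∩ Q.enlargement) ≤ μ.prod volume (X ∩ P.toSet) :=
          measure_mono fun z hz ↦ ⟨hz.1, hsub ⟨hz.2, hX hz.1⟩⟩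
      _ ≤ δ * μ.prod volume P.toSet := not_lt.1 fun h ↦ hnot ⟨hP, h⟩
      _ = δ * (5 ^ (finrank ℝ E + 2) * μ.prod volume Q.toSet) := by rw [hfive P hPQ]
  · calc μ.prod volume (X ∩ Q.enlargement) ≤ μ.prod volume X := measure_mono inter_subset_left
      _ ≤ δ * μ.prod volume Q₀.toSet := hXδ
      _ ≤ δ * μ.prod volume (toSet ⟨Q.center, Q.top, 5 * Q.radius⟩) := by
        refine mul_le_mul_right ?_ δ
        exact measure_toSet_mono μ (hr.trans_le hQ.radius_le) hlt.le
      _ = δ * (5 ^ (finrank ℝ E + 2) * μ.prod volume Q.toSet) := by rw [hfive _ rfl]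

lemma exists_mem_stoppingFamily (hX : X ⊆ Q₀.toSet)
    (hXδ : μ.prod volume X ≤ δ * μ.prod volume Q₀.toSet) {z : E × ℝ} (hz : z ∈ Q₀.toSet)
    (hdense : ∃ Q ∈ denseFamily μ Q₀ X δ, z ∈ Q.toSet) :
    ∃ Q ∈ stoppingFamily μ Q₀ X δ, z ∈ Q.toSet := by
  obtain ⟨Q, ⟨hQ, hzQ⟩, hmax⟩ := exists_mem_forall_le_mul
    (S := {Q | Q ∈ denseFamily μ Q₀ X δ ∧ z ∈ Q.toSet}) one_lt_two hdense
    ⟨Q₀.radius, forall_mem_image.2 fun Q hQ ↦ hQ.1.1.radius_le⟩ fun Q hQ ↦ hQ.1.1.radius_pos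
  exact ⟨Q, ⟨hQ, measure_inter_enlargement_le hX hXδ hQ.1
    fun P hP hsub ↦ hmax P ⟨hP, hsub ⟨hzQ, hz⟩⟩⟩, hzQ⟩

/-- The density hypothesis only concerns cylinders whose top lies strictly below that of `Q₀`;
lowering the top slightly covers those that share it with `Q₀`. -/
lemma inter_subset_of_mem_denseFamily {Y : Set (E × ℝ)}
    (hY : ∀ Q : BackwardCylinder E, (Q.center, Q.top) ∈ Q₀.toSet → 0 < Q.radius →
      Q.radius ≤ Q₀.radius → δ * μ.prod volume Q.toSet ≤ μ.prod volume (X ∩ Q.toSet) →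
      Q.toSet ∩ Q₀.toSet ⊆ Y)
    (hQ : Q ∈ denseFamily μ Q₀ X δ) : Q.toSet ∩ Q₀.toSet ⊆ Y := by
  obtain ⟨hanchored, hdense⟩ := hQ
  rintro ⟨y, τ⟩ ⟨⟨hy, hτ⟩, hyτ₀⟩
  obtain ⟨t, ht, hlt⟩ := exists_top_mem_Ioo_lt_measure_inter hdense hτ.2
  have hmeasure : μ.prod volume (toSet { Q with top := t }) ≤ μ.prod volume Q.toSet :=
    measure_toSet_mono μ hanchored.radius_pos le_rfl
  refine hY { Q with top := t }
    ⟨hanchored.center_mem, hyτ₀.2.1.trans ht.1, ht.2.trans_le hanchored.top_le⟩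
    hanchored.radius_pos hanchored.radius_le ((mul_le_mul_right hmeasure δ).trans hlt.le)
    ⟨⟨hy, (sub_le_sub_right ht.2.le _).trans_lt hτ.1, ht.1⟩, hyτ₀⟩

lemma measure_inter_enlargement_le_inter (hQ : Q ∈ stoppingFamily μ Q₀ X δ) :
    μ.prod volume (X ∩ Q.enlargement) ≤
      25 * 10 ^ finrank ℝ E * δ * μ.prod volume (Q.toSet ∩ Q₀.toSet) := by
  calc μ.prod volume (X ∩ Q.enlargement)
      ≤ δ * (5 ^ (finrank ℝ E + 2) * μ.prod volume Q.toSet) := hQ.2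
    _ ≤ δ * (5 ^ (finrank ℝ E + 2) *
        (2 ^ finrank ℝ E * μ.prod volume (Q.toSet ∩ Q₀.toSet))) := by
      gcongr
      exact hQ.1.1.measure_toSet_le
    _ = 25 * 10 ^ finrank ℝ E * δ * μ.prod volume (Q.toSet ∩ Q₀.toSet) := by
      rw [show (10 : ℝ≥0∞) = 5 * 2 by norm_num, mul_pow]
      ring

end BackwardCylinder

open BackwardCylinder in
theorem parabolic_covering_lemma_general (μ : Measure E) [μ.IsAddHaarMeasure]
    {Q₀ : BackwardCylinder E} {X Y : Set (E × ℝ)} {δ : ℝ≥0∞} (hX : X ⊆ Q₀.toSet) (hδ : δ < 1)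
    (hXδ : μ.prod volume X ≤ δ * μ.prod volume Q₀.toSet)
    (hY : ∀ Q : BackwardCylinder E, (Q.center, Q.top) ∈ Q₀.toSet → 0 < Q.radius →
      Q.radius ≤ Q₀.radius → δ * μ.prod volume Q.toSet ≤ μ.prod volume (X ∩ Q.toSet) →
      Q.toSet ∩ Q₀.toSet ⊆ Y) :
    μ.prod volume X ≤ 25 * 10 ^ finrank ℝ E * δ * μ.prod volume Y := by
  obtain ⟨u, hu, hcount, hdisj, henlarge⟩ :=
    exists_subfamily_pairwiseDisjoint_subset_enlargement (F := stoppingFamily μ Q₀ X δ)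
      (fun Q hQ ↦ hQ.1.1.radius_pos) fun Q hQ ↦ hQ.1.1.radius_le
  have hcover : ∀ᵐ z ∂μ.prod volume, z ∈ X → z ∈ ⋃ Q ∈ u, X ∩ Q.enlargement := by
    filter_upwards [ae_exists_mem_denseFamily μ hX hδ] with z hz hzX
    obtain ⟨P, hP, hzP⟩ := exists_mem_stoppingFamily hX hXδ (hX hzX) (hz hzX)
    obtain ⟨Q, hQ, hPQ⟩ := henlarge P hP
    exact mem_biUnion hQ ⟨hzX, hPQ hzP⟩
  calc μ.prod volume X ≤ μ.prod volume (⋃ Q ∈ u, X ∩ Q.enlargement) := measure_mono_ae hcover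
    _ ≤ ∑' Q : u, μ.prod volume (X ∩ Q.1.enlargement) := measure_biUnion_le _ hcount _
    _ ≤ ∑' Q : u, 25 * 10 ^ finrank ℝ E * δ * μ.prod volume (Q.1.toSet ∩ Q₀.toSet) :=
      ENNReal.tsum_le_tsum fun Q ↦ measure_inter_enlargement_le_inter (hu Q.2)
    _ = 25 * 10 ^ finrank ℝ E * δ * μ.prod volume (⋃ Q ∈ u, Q.toSet ∩ Q₀.toSet) := by
      rw [ENNReal.tsum_mul_left, measure_biUnion hcount (hdisj.mono fun Q ↦ inter_subset_left)
        fun Q _ ↦ Q.measurableSet_toSet.inter Q₀.measurableSet_toSet]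
    _ ≤ 25 * 10 ^ finrank ℝ E * δ * μ.prod volume Y := by
      gcongr
      exact iUnion₂_subset fun Q hQ ↦ inter_subset_of_mem_denseFamily hY (hu hQ).1

end Haar

/-- Parabolic Calderón–Zygmund covering lemma: if `X ⊆ Y ⊆ Q_{R̄}` are
measurable, `0 < δ < 1`, `|X| < δ|Q_{R̄}|`, and for every `(x,t) ∈ Q_{R̄}` and `ρ ∈ (0,R̄]`
the density condition `|X ∩ Q_ρ(x,t)| ≥ δ|Q_ρ(x,t)|` implies `Q_ρ(x,t) ∩ Q_{R̄} ⊆ Y`,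
then `|X| ≤ c₃ δ |Y|` with `c₃ = c₃(n)`. -/
theorem parabolic_covering_lemma (n : ℕ) (hn : 2 ≤ n) :
    ∃ c₃ : ℝ, 0 < c₃ ∧
      ∀ (x₀ : EuclideanSpace ℝ (Fin n)) (t₀ R : ℝ), 0 < R →
      ∀ X Y : Set (EuclideanSpace ℝ (Fin n) × ℝ),
        MeasurableSet X → MeasurableSet Y →
        X ⊆ Y → Y ⊆ parabolicCylinder n x₀ t₀ R →
      ∀ δ : ℝ, 0 < δ → δ < 1 →
        volume X < ENNReal.ofReal δ * volume (parabolicCylinder n x₀ t₀ R) →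
        (∀ (x : EuclideanSpace ℝ (Fin n)) (t : ℝ), (x, t) ∈ parabolicCylinder n x₀ t₀ R →
          ∀ ρ : ℝ, 0 < ρ → ρ ≤ R →
            ENNReal.ofReal δ * volume (parabolicCylinder n x t ρ) ≤
              volume (X ∩ parabolicCylinder n x t ρ) →
            parabolicCylinder n x t ρ ∩ parabolicCylinder n x₀ t₀ R ⊆ Y) →
        volume X ≤ ENNReal.ofReal (c₃ * δ) * volume Y := by
  refine ⟨25 * 10 ^ n, by positivity, fun x₀ t₀ R _ X Y _ _ hXY hYQ δ _ hδ hXδ hdense ↦ ?_⟩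
  have hmain := parabolic_covering_lemma_general volume (Q₀ := ⟨x₀, t₀, R⟩) (hXY.trans hYQ)
    (ofReal_lt_one.2 hδ) hXδ.le fun Q hQ ↦ hdense Q.center Q.top hQ Q.radius
  rwa [finrank_euclideanSpace_fin, ← ofReal_ofNat 25, ← ofReal_ofNat 10,
    ← ENNReal.ofReal_pow (by positivity), ← ENNReal.ofReal_mul (by positivity),
    ← ENNReal.ofReal_mul (by positivity)] at hmain
end

section
/- (Capacitary Poincaré inequality, for continuously differentiable functions.) Let n ≥ 2 and 1 < p < ∞, let x₀ ∈ ℝⁿ and ρ > 0, and let w : ℝⁿ → ℝ be continuously differentiable. Set K_ρ(w) := { x ∈ B̄(x₀,ρ) : w(x) = 0 }. Then there exists a constant c depending only on n and p such that cap_p(K_ρ(w), B(x₀,2ρ)) · ⨍_{B(x₀,2ρ)} |w|^p dx ≤ c ∫_{B(x₀,2ρ)} |Dw|^p dx, where ⨍ denotes the integral average. -/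
open MeasureTheory Set ENNReal

/-- The variational `p`-capacity of a set `K` relative to an open set `U ⊆ ℝⁿ`:
`cap_p(K,U) = inf { ∫_U |Dφ|^p : φ smooth, compactly supported in U, φ ≥ 1 on K }`. -/
noncomputable def pCapacity (n : ℕ) (p : ℝ) (K U : Set (EuclideanSpace ℝ (Fin n))) : ℝ≥0∞ :=
  ⨅ (φ : EuclideanSpace ℝ (Fin n) → ℝ) (_ : ContDiff ℝ (⊤ : ℕ∞) φ) (_ : HasCompactSupport φ)
    (_ : tsupport φ ⊆ U) (_ : ∀ x ∈ K, 1 ≤ φ x),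
      ∫⁻ x in U, ENNReal.ofReal (‖fderiv ℝ φ x‖ ^ p)

/-!
For every real `a` and every cutoff `η`, the function `η (w - a)` equals `-a` on the zero set of
`w`, so by homogeneity `|a|^p` times the capacity is at most `∫ |D(η (w - a))|^p`. Taking `a = w y`
and integrating over `y` leaves the double integral of `|w x - w y|^p`, which the Poincaré
inequality on a convex set controls: integrate `Dw` along the segment from `x` to `y` and change
variables in the endpoint of weight at least `1 / 2`. Test functions that are merely `C¹` are
admissible for the capacity, because mollification approximates `φ` and `Dφ` uniformly while
enlarging the support as little as one likes.
-/

section Mollification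

open Metric ContinuousLinearMap
open scoped Convolution ContDiff

variable {E F : Type*} [NormedAddCommGroup E] [NormedSpace ℝ E]
  [NormedAddCommGroup F] [NormedSpace ℝ F] [FiniteDimensional ℝ E]

theorem tsupport_normed_convolution_subset [MeasurableSpace E] [BorelSpace E]
    {μ : Measure E} [IsLocallyFiniteMeasure μ] [μ.IsOpenPosMeasure] (b : ContDiffBump (0 : E))
    (f : E → F) :
    tsupport (b.normed μ ⋆[lsmul ℝ ℝ, μ] f) ⊆ cthickening b.rOut (tsupport f) := by
  refine closure_minimal ?_ isClosed_cthickening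
  refine (support_convolution_subset_swap _).trans ?_
  rintro _ ⟨x, hx, y, hy, rfl⟩
  refine mem_cthickening_of_dist_le _ x _ _ (subset_tsupport f hx) ?_
  have hy_lt : ‖y‖ < b.rOut := mem_ball_zero_iff.1 (b.support_normed_eq (μ := μ) ▸ hy)
  simpa only [dist_self_add_left] using hy_lt.le

theorem fderiv_normed_convolution [MeasurableSpace E] [BorelSpace E] {μ : Measure E}
    [IsLocallyFiniteMeasure μ] [μ.IsAddLeftInvariant] (b : ContDiffBump (0 : E)) {f : E → F}
    (hf : ContDiff ℝ 1 f) (hfc : HasCompactSupport f) (x : E) :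
    fderiv ℝ (b.normed μ ⋆[lsmul ℝ ℝ, μ] f) x =
      (b.normed μ ⋆[lsmul ℝ ℝ, μ] fderiv ℝ f) x :=
  (hfc.hasFDerivAt_convolution_right (lsmul ℝ ℝ)
    b.continuous_normed.locallyIntegrable hf x).fderiv

theorem exists_contDiff_dist_fderiv_le [CompleteSpace F] {f : E → F} (hf : ContDiff ℝ 1 f)
    (hfc : HasCompactSupport f) {U : Set E} (hU : IsOpen U) (hfU : tsupport f ⊆ U)
    {δ : ℝ} (hδ : 0 < δ) :
    ∃ g : E → F, ContDiff ℝ ∞ g ∧ HasCompactSupport g ∧ tsupport g ⊆ U ∧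
      (∀ x, dist (g x) (f x) ≤ δ) ∧ ∀ x, dist (fderiv ℝ g x) (fderiv ℝ f x) ≤ δ := by
  borelize E
  have hf' : Continuous (fderiv ℝ f) := hf.continuous_fderiv one_ne_zero
  obtain ⟨r₀, hr₀, hr₀U⟩ := hfc.isCompact.exists_cthickening_subset_open hU hfU
  obtain ⟨r₁, hr₁, hclose⟩ := Metric.uniformContinuous_iff.1
    ((hfc.uniformContinuous_of_continuous hf.continuous).prodMk
      ((hfc.fderiv ℝ).uniformContinuous_of_continuous hf')) δ hδ
  have hr : 0 < min r₀ r₁ := lt_min hr₀ hr₁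
  let b : ContDiffBump (0 : E) := ⟨min r₀ r₁ / 2, min r₀ r₁, half_pos hr, half_lt_self hr⟩
  have hball {x y : E} (hy : y ∈ ball x b.rOut) :
      dist (f y) (f x) ≤ δ ∧ dist (fderiv ℝ f y) (fderiv ℝ f x) ≤ δ :=
    max_le_iff.1 (hclose ((mem_ball.1 hy).trans_le (min_le_right _ _))).le
  let μ : Measure E := .addHaar
  have hsupp : tsupport (b.normed μ ⋆[lsmul ℝ ℝ, μ] f) ⊆ cthickening r₀ (tsupport f) :=
    (tsupport_normed_convolution_subset b f).trans (cthickening_mono (min_le_left _ _) _)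
  refine ⟨b.normed μ ⋆[lsmul ℝ ℝ, μ] f, ?_, ?_, hsupp.trans hr₀U, fun x => ?_, fun x => ?_⟩
  · exact b.hasCompactSupport_normed.contDiff_convolution_left _ b.contDiff_normed
      hf.continuous.locallyIntegrable
  · exact hfc.isCompact.cthickening.of_isClosed_subset (isClosed_tsupport _) hsupp
  · exact b.dist_normed_convolution_le hf.continuous.aestronglyMeasurable
      fun y hy => (hball hy).1
  · rw [fderiv_normed_convolution b hf hfc]
    exact b.dist_normed_convolution_le hf'.aestronglyMeasurable fun y hy => (hball hy).2

end Mollification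

section Poincare

open AffineMap Metric Module

theorem rpow_lintegral_le_lintegral_rpow {α : Type*} [MeasurableSpace α] {μ : Measure α}
    [IsProbabilityMeasure μ] {p : ℝ} (hp : 1 ≤ p) {g : α → ℝ≥0∞} (hg : AEMeasurable g μ) :
    (∫⁻ a, g a ∂μ) ^ p ≤ ∫⁻ a, g a ^ p ∂μ := by
  have hp0 : 0 < p := by linarith
  have h := eLpNorm'_le_eLpNorm'_of_exponent_le one_pos hp μ hg.aestronglyMeasurable
  simpa only [eLpNorm', enorm_eq_self, ENNReal.rpow_one, div_one, one_div,
    ENNReal.le_rpow_inv_iff hp0] using h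

variable {E F : Type*} [NormedAddCommGroup E] [NormedSpace ℝ E]
  [NormedAddCommGroup F] [NormedSpace ℝ F]

theorem enorm_sub_le_lintegral_fderiv_lineMap {f : E → F} {U : Set E} (hU : IsOpen U)
    (hf : ContDiffOn ℝ 1 f U) {x y : E} (hxy : segment ℝ x y ⊆ U) :
    ‖f y - f x‖ₑ ≤ ‖y - x‖ₑ * ∫⁻ t in Icc (0 : ℝ) 1, ‖fderiv ℝ f (lineMap x y t)‖ₑ := by
  have hmaps : MapsTo (lineMap x y) (Icc (0 : ℝ) 1) U := by
    rwa [mapsTo_iff_image_subset, ← segment_eq_image_lineMap]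
  have hderiv {t : ℝ} (ht : t ∈ Icc (0 : ℝ) 1) :
      deriv (fun s => f (lineMap x y s)) t = fderiv ℝ f (lineMap x y t) (y - x) :=
    ((hf.differentiableOn one_ne_zero).differentiableAt
      (hU.mem_nhds (hmaps ht))).hasFDerivAt.comp_hasDerivAt t hasDerivAt_lineMap |>.deriv
  calc ‖f y - f x‖ₑ
      ≤ ∫⁻ t in Icc (0 : ℝ) 1, ‖deriv (fun s => f (lineMap x y s)) t‖ₑ := by
        simpa only [lineMap_apply_one, lineMap_apply_zero, Function.comp_def,
          ContinuousAffineMap.coe_lineMap_eq] using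
          enorm_sub_le_lintegral_deriv_of_contDiffOn_Icc
            (hf.comp (ContinuousAffineMap.lineMap x y).contDiff.contDiffOn hmaps) zero_le_one
    _ ≤ ∫⁻ t in Icc (0 : ℝ) 1, ‖y - x‖ₑ * ‖fderiv ℝ f (lineMap x y t)‖ₑ := by
        refine setLIntegral_mono' measurableSet_Icc fun t ht => ?_
        rw [hderiv ht, mul_comm]
        exact ContinuousLinearMap.le_opENorm _ _
    _ = ‖y - x‖ₑ * ∫⁻ t in Icc (0 : ℝ) 1, ‖fderiv ℝ f (lineMap x y t)‖ₑ :=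
        lintegral_const_mul' _ _ enorm_ne_top

theorem enorm_sub_rpow_le_lintegral_fderiv_lineMap [CompleteSpace F] {p : ℝ} (hp : 1 ≤ p)
    {f : E → F} {U : Set E} (hU : IsOpen U) (hf : ContDiffOn ℝ 1 f U) {x y : E}
    (hxy : segment ℝ x y ⊆ U) :
    ‖f y - f x‖ₑ ^ p ≤
      ‖y - x‖ₑ ^ p * ∫⁻ t in Icc (0 : ℝ) 1, ‖fderiv ℝ f (lineMap x y t)‖ₑ ^ p := by
  borelize E
  have hp0 : 0 ≤ p := by linarith
  have : IsProbabilityMeasure (volume.restrict (Icc (0 : ℝ) 1)) := ⟨by simp⟩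
  have hmeas : Measurable fun t : ℝ => ‖fderiv ℝ f (lineMap x y t)‖ₑ :=
    ((measurable_fderiv ℝ f).comp lineMap_continuous.measurable).enorm
  calc ‖f y - f x‖ₑ ^ p
      ≤ (‖y - x‖ₑ * ∫⁻ t in Icc (0 : ℝ) 1, ‖fderiv ℝ f (lineMap x y t)‖ₑ) ^ p := by
        gcongr
        exact enorm_sub_le_lintegral_fderiv_lineMap hU hf hxy
    _ = ‖y - x‖ₑ ^ p * (∫⁻ t in Icc (0 : ℝ) 1, ‖fderiv ℝ f (lineMap x y t)‖ₑ) ^ p :=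
        ENNReal.mul_rpow_of_nonneg _ _ hp0
    _ ≤ ‖y - x‖ₑ ^ p * ∫⁻ t in Icc (0 : ℝ) 1, ‖fderiv ℝ f (lineMap x y t)‖ₑ ^ p := by
        gcongr
        exact rpow_lintegral_le_lintegral_rpow hp hmeas.aemeasurable

variable [FiniteDimensional ℝ E] [MeasurableSpace E] [BorelSpace E]
  {μ : Measure E} [μ.IsAddHaarMeasure]

theorem lintegral_comp_lineMap {g : E → ℝ≥0∞} (hg : Measurable g) (x : E) {t : ℝ} (ht : t ≠ 0) :
    ∫⁻ y, g (lineMap x y t) ∂μ = ENNReal.ofReal |(t ^ finrank ℝ E)⁻¹| * ∫⁻ y, g y ∂μ := by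
  calc ∫⁻ y, g (lineMap x y t) ∂μ
      = ∫⁻ z, g ((1 - t) • x + z) ∂(μ.map (t • ·)) := by
        simp only [lineMap_apply_module]
        rw [lintegral_map (by fun_prop) (by fun_prop)]
    _ = ENNReal.ofReal |(t ^ finrank ℝ E)⁻¹| * ∫⁻ y, g y ∂μ := by
        rw [Measure.map_addHaar_smul _ ht, lintegral_smul_measure, lintegral_add_left_eq_self,
          smul_eq_mul]

theorem lintegral_comp_lineMap_le {g : E → ℝ≥0∞} (hg : Measurable g) (x : E) {t : ℝ}
    (ht : 1 / 2 ≤ t) :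
    ∫⁻ y, g (lineMap x y t) ∂μ ≤ 2 ^ finrank ℝ E * ∫⁻ y, g y ∂μ := by
  have ht0 : 0 < t := by linarith
  rw [lintegral_comp_lineMap hg x ht0.ne']
  gcongr
  rw [abs_of_pos (by positivity), ← inv_pow, ENNReal.ofReal_pow (by positivity)]
  gcongr
  exact ENNReal.ofReal_le_of_le_toReal ((inv_le_comm₀ ht0 two_pos).2 (by simpa using ht))

/- Near `t = 0` the map `y ↦ lineMap x y t` is strongly contracting, but then
`x ↦ lineMap x y t` is not: one integrates first in the variable with weight at least `1 / 2`. -/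
theorem lintegral_lintegral_comp_lineMap_le {g : E → ℝ≥0∞} (hg : Measurable g) (A : Set E)
    (t : ℝ) :
    ∫⁻ x in A, ∫⁻ y in A, g (lineMap x y t) ∂μ ∂μ ≤
      2 ^ finrank ℝ E * μ A * ∫⁻ y, g y ∂μ := by
  have hhalf {s : ℝ} (hs : 1 / 2 ≤ s) :
      ∫⁻ x in A, ∫⁻ y in A, g (lineMap x y s) ∂μ ∂μ ≤
        2 ^ finrank ℝ E * μ A * ∫⁻ y, g y ∂μ := by
    calc ∫⁻ x in A, ∫⁻ y in A, g (lineMap x y s) ∂μ ∂μ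
        ≤ ∫⁻ _ in A, 2 ^ finrank ℝ E * ∫⁻ y, g y ∂μ ∂μ := lintegral_mono fun x =>
          (setLIntegral_le_lintegral _ _).trans (lintegral_comp_lineMap_le hg x hs)
      _ = 2 ^ finrank ℝ E * μ A * ∫⁻ y, g y ∂μ := by
          rw [setLIntegral_const, mul_right_comm]
  obtain ht | ht := le_total (1 / 2) t
  · exact hhalf ht
  · have hmeas : Measurable fun q : E × E => g (lineMap q.1 q.2 t) := by fun_prop
    calc ∫⁻ x in A, ∫⁻ y in A, g (lineMap x y t) ∂μ ∂μ
        = ∫⁻ y in A, ∫⁻ x in A, g (lineMap y x (1 - t)) ∂μ ∂μ := by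
          simp only [lineMap_apply_one_sub]
          exact lintegral_lintegral_swap hmeas.aemeasurable
      _ ≤ 2 ^ finrank ℝ E * μ A * ∫⁻ y, g y ∂μ := hhalf (by linarith)

theorem lintegral_lintegral_lintegral_comp_lineMap_le {g : E → ℝ≥0∞} (hg : Measurable g)
    (A : Set E) :
    ∫⁻ x in A, ∫⁻ y in A, (∫⁻ t in Icc (0 : ℝ) 1, g (lineMap x y t)) ∂μ ∂μ ≤
      2 ^ finrank ℝ E * μ A * ∫⁻ y, g y ∂μ := by
  have hmeas : Measurable fun q : (E × ℝ) × E => g (lineMap q.1.1 q.2 q.1.2) := by fun_prop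
  calc ∫⁻ x in A, ∫⁻ y in A, (∫⁻ t in Icc (0 : ℝ) 1, g (lineMap x y t)) ∂μ ∂μ
      = ∫⁻ x in A, (∫⁻ t in Icc (0 : ℝ) 1, ∫⁻ y in A, g (lineMap x y t) ∂μ) ∂μ := by
        refine lintegral_congr fun x => lintegral_lintegral_swap (Measurable.aemeasurable ?_)
        change Measurable fun q : E × ℝ => g (lineMap x q.1 q.2)
        fun_prop
    _ = ∫⁻ t in Icc (0 : ℝ) 1, ∫⁻ x in A, ∫⁻ y in A, g (lineMap x y t) ∂μ ∂μ :=
        lintegral_lintegral_swap hmeas.lintegral_prod_right'.aemeasurable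
    _ ≤ ∫⁻ _ in Icc (0 : ℝ) 1, 2 ^ finrank ℝ E * μ A * ∫⁻ y, g y ∂μ :=
        lintegral_mono fun t => lintegral_lintegral_comp_lineMap_le hg A t
    _ = 2 ^ finrank ℝ E * μ A * ∫⁻ y, g y ∂μ := by simp

theorem lintegral_lintegral_enorm_sub_rpow_le_of_convex [CompleteSpace F] {p : ℝ} (hp : 1 ≤ p)
    {f : E → F} {U : Set E} (hUc : Convex ℝ U) (hU : IsOpen U) (hf : ContDiffOn ℝ 1 f U) :
    ∫⁻ x in U, ∫⁻ y in U, ‖f y - f x‖ₑ ^ p ∂μ ∂μ ≤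
      2 ^ finrank ℝ E * ediam U ^ p * μ U * ∫⁻ x in U, ‖fderiv ℝ f x‖ₑ ^ p ∂μ := by
  obtain ⟨g, hg_def⟩ : ∃ g, g = U.indicator fun z => ‖fderiv ℝ f z‖ₑ ^ p := ⟨_, rfl⟩
  have hg : Measurable g :=
    hg_def ▸ ((measurable_fderiv ℝ f).enorm.pow_const p).indicator hU.measurableSet
  have hmeas : Measurable fun q : E × E => ∫⁻ t in Icc (0 : ℝ) 1, g (lineMap q.1 q.2 t) :=
    Measurable.lintegral_prod_right' (f := fun q : (E × E) × ℝ => g (lineMap q.1.1 q.1.2 q.2))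
      (by fun_prop)
  have hmeas_left (x : E) : Measurable fun y => ∫⁻ t in Icc (0 : ℝ) 1, g (lineMap x y t) :=
    hmeas.comp (f := (x, ·)) measurable_prodMk_left
  have hpointwise {x y : E} (hx : x ∈ U) (hy : y ∈ U) :
      ‖f y - f x‖ₑ ^ p ≤ ediam U ^ p * ∫⁻ t in Icc (0 : ℝ) 1, g (lineMap x y t) := by
    refine (enorm_sub_rpow_le_lintegral_fderiv_lineMap hp hU hf
      (hUc.segment_subset hx hy)).trans ?_
    gcongr ?_ ^ p * ?_
    · exact edist_eq_enorm_sub y x ▸ edist_le_ediam_of_mem hy hx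
    · refine setLIntegral_mono' measurableSet_Icc fun t ht => ?_
      rw [hg_def, indicator_of_mem (hUc.lineMap_mem hx hy ht)]
  calc ∫⁻ x in U, ∫⁻ y in U, ‖f y - f x‖ₑ ^ p ∂μ ∂μ
      ≤ ∫⁻ x in U, ∫⁻ y in U,
          ediam U ^ p * (∫⁻ t in Icc (0 : ℝ) 1, g (lineMap x y t)) ∂μ ∂μ :=
        setLIntegral_mono' hU.measurableSet fun x hx =>
          setLIntegral_mono' hU.measurableSet fun y hy => hpointwise hx hy
    _ = ediam U ^ p *
          ∫⁻ x in U, ∫⁻ y in U, (∫⁻ t in Icc (0 : ℝ) 1, g (lineMap x y t)) ∂μ ∂μ := by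
        rw [← lintegral_const_mul _ hmeas.lintegral_prod_right']
        simp only [lintegral_const_mul _ (hmeas_left _)]
    _ ≤ ediam U ^ p * (2 ^ finrank ℝ E * μ U * ∫⁻ x, g x ∂μ) := by
        gcongr
        exact lintegral_lintegral_lintegral_comp_lineMap_le hg U
    _ = 2 ^ finrank ℝ E * ediam U ^ p * μ U * ∫⁻ x in U, ‖fderiv ℝ f x‖ₑ ^ p ∂μ := by
        rw [hg_def, lintegral_indicator hU.measurableSet]
        ring

end Poincare

section Capacity

open Metric Filter
open scoped ContDiff Topology

theorem ofReal_norm_rpow {F : Type*} [SeminormedAddCommGroup F] (v : F) {p : ℝ} (hp : 0 ≤ p) :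
    ENNReal.ofReal (‖v‖ ^ p) = ‖v‖ₑ ^ p := by
  rw [← ENNReal.ofReal_rpow_of_nonneg (norm_nonneg v) hp, ofReal_norm]

theorem lintegral_enorm_rpow_le_of_enorm_sub_le {α F : Type*} [MeasurableSpace α]
    {μ : Measure α} [NormedAddCommGroup F] {p : ℝ} (hp : 1 ≤ p) {f g : α → F}
    (hf : AEStronglyMeasurable f μ) (hg : AEStronglyMeasurable g μ) {δ : ℝ≥0∞}
    (hfg : ∀ a, ‖f a - g a‖ₑ ≤ δ) :
    ∫⁻ a, ‖f a‖ₑ ^ p ∂μ ≤ ((∫⁻ a, ‖g a‖ₑ ^ p ∂μ) ^ p⁻¹ + δ * μ univ ^ p⁻¹) ^ p := by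
  have hp0 : 0 < p := by linarith
  have hsub : eLpNorm' (f - g) p μ ≤ δ * μ univ ^ p⁻¹ := by
    calc eLpNorm' (f - g) p μ ≤ eLpNorm' (fun _ => δ) p μ :=
          eLpNorm'_mono_enorm_ae hp0.le (.of_forall hfg)
      _ = δ * μ univ ^ p⁻¹ := by rw [eLpNorm'_const _ hp0, enorm_eq_self, one_div]
  rw [lintegral_rpow_enorm_eq_rpow_eLpNorm' hp0]
  gcongr
  calc eLpNorm' f p μ = eLpNorm' (g + (f - g)) p μ := by rw [add_sub_cancel]
    _ ≤ eLpNorm' g p μ + eLpNorm' (f - g) p μ := eLpNorm'_add_le hg (hf.sub hg) hp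
    _ ≤ (∫⁻ a, ‖g a‖ₑ ^ p ∂μ) ^ p⁻¹ + δ * μ univ ^ p⁻¹ := by
      gcongr
      rw [eLpNorm', one_div]

variable {n : ℕ} {p : ℝ} {K U V : Set (EuclideanSpace ℝ (Fin n))}

theorem pCapacity_le {φ : EuclideanSpace ℝ (Fin n) → ℝ} (hφ : ContDiff ℝ ∞ φ)
    (hφc : HasCompactSupport φ) (hφU : tsupport φ ⊆ U) (hφK : ∀ x ∈ K, 1 ≤ φ x) :
    pCapacity n p K U ≤ ∫⁻ x in U, ENNReal.ofReal (‖fderiv ℝ φ x‖ ^ p) :=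
  iInf_le_of_le φ <| iInf_le_of_le hφ <| iInf_le_of_le hφc <| iInf_le_of_le hφU <|
    iInf_le_of_le hφK le_rfl

theorem pCapacity_anti (hp : 0 < p) (hUV : U ⊆ V) : pCapacity n p K V ≤ pCapacity n p K U := by
  refine le_iInf fun φ => le_iInf fun hφ => le_iInf fun hφc => le_iInf fun hφU =>
    le_iInf fun hφK => ?_
  refine (pCapacity_le hφ hφc (hφU.trans hUV) hφK).trans ?_
  have hsupp (x) (hx : x ∉ tsupport φ) : ENNReal.ofReal (‖fderiv ℝ φ x‖ ^ p) = 0 := by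
    rw [Function.notMem_support.1 fun h => hx (support_fderiv_subset ℝ h), norm_zero,
      Real.zero_rpow hp.ne', ENNReal.ofReal_zero]
  calc ∫⁻ x in V, ENNReal.ofReal (‖fderiv ℝ φ x‖ ^ p)
      = ∫⁻ x in V, (tsupport φ).indicator (fun x => ENNReal.ofReal (‖fderiv ℝ φ x‖ ^ p)) x := by
        rw [indicator_eq_self.2 fun x => not_imp_comm.1 (hsupp x)]
    _ = ∫⁻ x in tsupport φ ∩ V, ENNReal.ofReal (‖fderiv ℝ φ x‖ ^ p) :=
        setLIntegral_indicator (isClosed_tsupport φ).measurableSet _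
    _ ≤ ∫⁻ x in U, ENNReal.ofReal (‖fderiv ℝ φ x‖ ^ p) :=
        lintegral_mono_set (inter_subset_left.trans hφU)

theorem pCapacity_mul_rpow_le_of_contDiff_infty (hp : 0 ≤ p)
    {φ : EuclideanSpace ℝ (Fin n) → ℝ} (hφ : ContDiff ℝ ∞ φ) (hφc : HasCompactSupport φ)
    (hφU : tsupport φ ⊆ U) {a : ℝ} (ha : 0 < a) (hφK : ∀ x ∈ K, a ≤ φ x) :
    pCapacity n p K U * ENNReal.ofReal a ^ p ≤ ∫⁻ x in U, ‖fderiv ℝ φ x‖ₑ ^ p := by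
  have hcap : pCapacity n p K U ≤
      ∫⁻ x in U, ENNReal.ofReal (‖fderiv ℝ (a⁻¹ • φ) x‖ ^ p) :=
    pCapacity_le (hφ.const_smul a⁻¹) (hφc.smul_left (f := fun _ => a⁻¹))
      ((tsupport_smul_subset_right (fun _ => a⁻¹) φ).trans hφU)
      fun x hx => (one_le_inv_mul₀ ha).2 (hφK x hx)
  have hderiv (x) : ENNReal.ofReal (‖fderiv ℝ (a⁻¹ • φ) x‖ ^ p) =
      (ENNReal.ofReal a ^ p)⁻¹ * ‖fderiv ℝ φ x‖ₑ ^ p := by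
    rw [ofReal_norm_rpow _ hp, fderiv_const_smul (hφ.differentiable (by simp) x), enorm_smul,
      ENNReal.mul_rpow_of_nonneg _ _ hp, ← ENNReal.inv_rpow, ← ENNReal.ofReal_inv_of_pos ha,
      Real.enorm_of_nonneg (inv_nonneg.2 ha.le)]
  have ha_ne : ENNReal.ofReal a ^ p ≠ 0 := (ENNReal.rpow_pos (by simpa) (by simp)).ne'
  have ha_top : ENNReal.ofReal a ^ p ≠ ⊤ := by finiteness
  simp only [hderiv] at hcap
  rwa [lintegral_const_mul' _ _ (ENNReal.inv_ne_top.2 ha_ne), ← ENNReal.div_eq_inv_mul,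
    ENNReal.le_div_iff_mul_le (.inl ha_ne) (.inl ha_top)] at hcap

theorem pCapacity_mul_rpow_le_of_measure_ne_top (hp : 1 ≤ p) (hU : IsOpen U)
    (hU_top : volume U ≠ ⊤) {φ : EuclideanSpace ℝ (Fin n) → ℝ} (hφ : ContDiff ℝ 1 φ)
    (hφc : HasCompactSupport φ) (hφU : tsupport φ ⊆ U) {a : ℝ} (ha : 0 < a)
    (hφK : ∀ x ∈ K, a ≤ φ x) :
    pCapacity n p K U * ENNReal.ofReal a ^ p ≤ ∫⁻ x in U, ‖fderiv ℝ φ x‖ₑ ^ p := by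
  have hp0 : 0 < p := by linarith
  let I : ℝ≥0∞ := ∫⁻ x in U, ‖fderiv ℝ φ x‖ₑ ^ p
  have happrox {δ : ℝ} (hδ : 0 < δ) (hδa : δ < a) :
      pCapacity n p K U * ENNReal.ofReal (a - δ) ^ p ≤
        (I ^ p⁻¹ + ENNReal.ofReal δ * volume U ^ p⁻¹) ^ p := by
    obtain ⟨ψ, hψ, hψc, hψU, hψφ, hψφ'⟩ := exists_contDiff_dist_fderiv_le hφ hφc hU hφU hδ
    have hψK (x) (hx : x ∈ K) : a - δ ≤ ψ x := by
      have h₁ := (abs_le.1 (hψφ x)).1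
      have h₂ := hφK x hx
      linarith
    refine (pCapacity_mul_rpow_le_of_contDiff_infty hp0.le hψ hψc hψU (sub_pos.2 hδa) hψK).trans ?_
    rw [← Measure.restrict_apply_univ U]
    refine lintegral_enorm_rpow_le_of_enorm_sub_le hp
      (hψ.continuous_fderiv (by simp)).aestronglyMeasurable
      (hφ.continuous_fderiv one_ne_zero).aestronglyMeasurable fun x => ?_
    rw [← ofReal_norm, ← dist_eq_norm]
    exact ENNReal.ofReal_le_ofReal (hψφ' x)
  have hleft : Tendsto (fun δ : ℝ => pCapacity n p K U * ENNReal.ofReal (a - δ) ^ p) (𝓝[>] 0)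
      (𝓝 (pCapacity n p K U * ENNReal.ofReal a ^ p)) := by
    refine ENNReal.Tendsto.const_mul (.mono_left ?_ nhdsWithin_le_nhds)
      (.inl (ENNReal.rpow_pos (by simpa) (by simp)).ne')
    exact Continuous.tendsto' (ENNReal.continuous_rpow_const.comp <|
      ENNReal.continuous_ofReal.comp (by fun_prop)) _ _ (by simp)
  have hright : Tendsto (fun δ : ℝ => (I ^ p⁻¹ + ENNReal.ofReal δ * volume U ^ p⁻¹) ^ p) (𝓝[>] 0)
      (𝓝 I) := by
    refine .mono_left ?_ nhdsWithin_le_nhds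
    have hmul : Tendsto (fun δ : ℝ => ENNReal.ofReal δ * volume U ^ p⁻¹) (𝓝 0) (𝓝 0) := by
      rw [← zero_mul (volume U ^ p⁻¹)]
      exact ENNReal.Tendsto.mul_const (ENNReal.continuous_ofReal.tendsto' 0 0 (by simp))
        (.inr (by finiteness))
    have hrpow := (tendsto_const_nhds (x := I ^ p⁻¹)).add hmul |>.ennrpow_const p
    rwa [add_zero, ENNReal.rpow_inv_rpow hp0.ne'] at hrpow
  refine le_of_tendsto_of_tendsto hleft hright ?_
  filter_upwards [Ioo_mem_nhdsGT ha] with δ hδ using happrox hδ.1 hδ.2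

theorem pCapacity_mul_enorm_rpow_le (hp : 1 ≤ p) (hU : IsOpen U)
    {φ : EuclideanSpace ℝ (Fin n) → ℝ} (hφ : ContDiff ℝ 1 φ)
    (hφc : HasCompactSupport φ) (hφU : tsupport φ ⊆ U) {a : ℝ} (hφK : ∀ x ∈ K, φ x = a) :
    pCapacity n p K U * ‖a‖ₑ ^ p ≤ ∫⁻ x in U, ‖fderiv ℝ φ x‖ₑ ^ p := by
  have hp0 : 0 < p := by linarith
  obtain ⟨V, hV, hφV, hVU, hVc⟩ :=
    exists_open_between_and_isCompact_closure hφc.isCompact hU hφU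
  have hV_top : volume V ≠ ⊤ := measure_ne_top_of_subset subset_closure hVc.measure_ne_top
  calc pCapacity n p K U * ‖a‖ₑ ^ p ≤ pCapacity n p K V * ‖a‖ₑ ^ p := by
        gcongr
        exact pCapacity_anti hp0 (subset_closure.trans hVU)
    _ ≤ ∫⁻ x in V, ‖fderiv ℝ φ x‖ₑ ^ p := by
        obtain ha | rfl | ha := lt_trichotomy a 0
        · rw [← enorm_neg a, Real.enorm_of_nonneg (by linarith)]
          simpa using pCapacity_mul_rpow_le_of_measure_ne_top hp hV hV_top hφ.neg
            (hφc.comp_left neg_zero) ((tsupport_comp_subset neg_zero φ).trans hφV) (neg_pos.2 ha)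
            fun x hx => (neg_le_neg (hφK x hx).le)
        · simp [hp0]
        · rw [Real.enorm_of_nonneg ha.le]
          exact pCapacity_mul_rpow_le_of_measure_ne_top hp hV hV_top hφ hφc hφV ha
            fun x hx => (hφK x hx).ge
    _ ≤ ∫⁻ x in U, ‖fderiv ℝ φ x‖ₑ ^ p := lintegral_mono_set (subset_closure.trans hVU)

end Capacity

section Cutoff

open Metric
open scoped NNReal

variable {E F : Type*} [NormedAddCommGroup E] [NormedSpace ℝ E]
  [NormedAddCommGroup F] [NormedSpace ℝ F]

theorem contDiff_smul_of_tsupport_subset {k : WithTop ℕ∞} {η : E → ℝ} {f : E → F} {U : Set E}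
    (hU : IsOpen U) (hη : ContDiff ℝ k η) (hηU : tsupport η ⊆ U) (hf : ContDiffOn ℝ k f U) :
    ContDiff ℝ k fun x => η x • f x := by
  refine contDiff_iff_contDiffAt.2 fun x => ?_
  by_cases hx : x ∈ tsupport η
  · exact hη.contDiffAt.smul (hf.contDiffAt (hU.mem_nhds (hηU hx)))
  · refine contDiffAt_const (c := 0) |>.congr_of_eventuallyEq ?_
    filter_upwards [notMem_tsupport_iff_eventuallyEq.1 hx] with y hy
    rw [hy, Pi.zero_apply, zero_smul]

/-- `η` is a `C¹` cutoff function between `S` and `U`: it has compact support in `U`, equals `1`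
on `S`, is bounded by `1`, and its gradient is bounded by `L`. -/
structure IsCutoff (η : E → ℝ) (S U : Set E) (L : ℝ≥0) : Prop where
  contDiff : ContDiff ℝ 1 η
  hasCompactSupport : HasCompactSupport η
  tsupport_subset : tsupport η ⊆ U
  eq_one {x : E} : x ∈ S → η x = 1
  nnnorm_le_one (x : E) : ‖η x‖₊ ≤ 1
  nnnorm_fderiv_le (x : E) : ‖fderiv ℝ η x‖₊ ≤ L

theorem exists_isCutoff_closedBall_ball (E : Type*) [NormedAddCommGroup E] [NormedSpace ℝ E]
    [FiniteDimensional ℝ E] :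
    ∃ M : ℝ≥0, ∀ (x₀ : E) {ρ : ℝ}, 0 < ρ →
      ∃ η : E → ℝ, IsCutoff η (closedBall x₀ ρ) (ball x₀ (2 * ρ)) (M / ρ.toNNReal) := by
  let β : ContDiffBump (0 : E) := ⟨1, 3 / 2, one_pos, by norm_num⟩
  obtain ⟨M, hM⟩ := (β.hasCompactSupport.fderiv ℝ).exists_bound_of_continuous
    (β.contDiff.continuous_fderiv one_ne_zero)
  refine ⟨M.toNNReal, fun x₀ ρ hρ => ⟨fun x => β (ρ⁻¹ • (x - x₀)), ?_⟩⟩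
  have hnorm (x : E) : ‖ρ⁻¹ • (x - x₀)‖ = dist x x₀ / ρ := by
    rw [norm_smul, norm_inv, Real.norm_of_nonneg hρ.le, ← dist_eq_norm, inv_mul_eq_div]
  have hsupp : tsupport (fun x => β (ρ⁻¹ • (x - x₀))) ⊆ closedBall x₀ (3 / 2 * ρ) := by
    refine closure_minimal (fun x hx => ?_) isClosed_closedBall
    have hx' : ρ⁻¹ • (x - x₀) ∈ ball 0 (3 / 2 : ℝ) := β.support_eq ▸ hx
    rw [mem_ball_zero_iff, hnorm, div_lt_iff₀ hρ] at hx'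
    exact hx'.le
  constructor
  · exact β.contDiff.comp (by fun_prop)
  · exact (isCompact_closedBall _ _).of_isClosed_subset (isClosed_tsupport _) hsupp
  · exact hsupp.trans (closedBall_subset_ball (by linarith))
  · intro x hx
    refine β.one_of_mem_closedBall ?_
    rw [mem_closedBall_zero_iff, hnorm]
    exact (div_le_one hρ).2 hx
  · intro x
    exact (Real.norm_of_nonneg β.nonneg).trans_le β.le_one
  · intro x
    rw [fderiv_comp_sub (f := fun y => β (ρ⁻¹ • y)), fderiv_comp_smul, nnnorm_smul,
      nnnorm_inv, inv_mul_eq_div, ← Real.toNNReal_eq_nnnorm_of_nonneg hρ.le]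
    gcongr
    exact NNReal.le_toNNReal_of_coe_le (hM _)

variable {η : E → ℝ} {S U : Set E} {L : ℝ≥0}

theorem IsCutoff.enorm_fderiv_smul_le (hη : IsCutoff η S U L) {f : E → F} {x : E}
    (hf : DifferentiableAt ℝ f x) :
    ‖fderiv ℝ (fun y => η y • f y) x‖ₑ ≤ L * ‖f x‖ₑ + ‖fderiv ℝ f x‖ₑ := by
  simp only [enorm_eq_nnnorm]
  norm_cast
  rw [fderiv_fun_smul (hη.contDiff.differentiable one_ne_zero x) hf, add_comm]
  calc ‖(fderiv ℝ η x).smulRight (f x) + η x • fderiv ℝ f x‖₊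
      ≤ ‖fderiv ℝ η x‖₊ * ‖f x‖₊ + ‖η x‖₊ * ‖fderiv ℝ f x‖₊ := by
        refine (nnnorm_add_le _ _).trans_eq ?_
        rw [ContinuousLinearMap.nnnorm_smulRight_apply, nnnorm_smul]
    _ ≤ L * ‖f x‖₊ + ‖fderiv ℝ f x‖₊ := by
        gcongr
        · exact hη.nnnorm_fderiv_le x
        · exact mul_le_of_le_one_left (by positivity) (hη.nnnorm_le_one x)

theorem IsCutoff.lintegral_enorm_fderiv_smul_rpow_le [MeasurableSpace E] [OpensMeasurableSpace E]
    {μ : Measure E} [CompleteSpace F] {p : ℝ} (hp : 1 ≤ p) (hη : IsCutoff η S U L) (hU : IsOpen U)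
    {f : E → F} (hf : DifferentiableOn ℝ f U) :
    ∫⁻ x in U, ‖fderiv ℝ (fun y => η y • f y) x‖ₑ ^ p ∂μ ≤
      2 ^ (p - 1) * (L ^ p * (∫⁻ x in U, ‖f x‖ₑ ^ p ∂μ) + ∫⁻ x in U, ‖fderiv ℝ f x‖ₑ ^ p ∂μ) := by
  have hp0 : 0 ≤ p := by linarith
  calc ∫⁻ x in U, ‖fderiv ℝ (fun y => η y • f y) x‖ₑ ^ p ∂μ
      ≤ ∫⁻ x in U, 2 ^ (p - 1) * (L ^ p * ‖f x‖ₑ ^ p + ‖fderiv ℝ f x‖ₑ ^ p) ∂μ := by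
        refine setLIntegral_mono' hU.measurableSet fun x hx => ?_
        rw [← ENNReal.mul_rpow_of_nonneg _ _ hp0]
        refine le_trans ?_ (ENNReal.rpow_add_le_mul_rpow_add_rpow _ _ hp)
        gcongr
        exact hη.enorm_fderiv_smul_le (hf.differentiableAt (hU.mem_nhds hx))
    _ = 2 ^ (p - 1) *
          (L ^ p * (∫⁻ x in U, ‖f x‖ₑ ^ p ∂μ) + ∫⁻ x in U, ‖fderiv ℝ f x‖ₑ ^ p ∂μ) := by
        rw [lintegral_const_mul' _ _ (by finiteness),
          lintegral_add_right _ ((measurable_fderiv ℝ f).enorm.pow_const p),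
          lintegral_const_mul' _ _ (by finiteness)]

end Cutoff

section Capacitary

open Metric
open scoped NNReal

variable {n : ℕ} {p : ℝ} {η w : EuclideanSpace ℝ (Fin n) → ℝ}
  {S U : Set (EuclideanSpace ℝ (Fin n))} {L : ℝ≥0}

theorem pCapacity_zeros_mul_enorm_rpow_le (hp : 1 ≤ p) (hU : IsOpen U) (hη : IsCutoff η S U L)
    (hw : ContDiffOn ℝ 1 w U) (a : ℝ) :
    pCapacity n p {x ∈ S | w x = 0} U * ‖a‖ₑ ^ p ≤
      2 ^ (p - 1) *
        (L ^ p * (∫⁻ x in U, ‖w x - a‖ₑ ^ p) + ∫⁻ x in U, ‖fderiv ℝ w x‖ₑ ^ p) := by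
  have hwa : ContDiffOn ℝ 1 (fun x => w x - a) U := hw.sub contDiffOn_const
  have hzeros (x) (hx : x ∈ {x ∈ S | w x = 0}) : η x • (w x - a) = -a := by
    rw [hη.eq_one hx.1, hx.2, one_smul, zero_sub]
  calc pCapacity n p {x ∈ S | w x = 0} U * ‖a‖ₑ ^ p
      = pCapacity n p {x ∈ S | w x = 0} U * ‖-a‖ₑ ^ p := by rw [enorm_neg]
    _ ≤ ∫⁻ x in U, ‖fderiv ℝ (fun x => η x • (w x - a)) x‖ₑ ^ p :=
        pCapacity_mul_enorm_rpow_le hp hU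
          (contDiff_smul_of_tsupport_subset hU hη.contDiff hη.tsupport_subset hwa)
          hη.hasCompactSupport.smul_right
          ((tsupport_smul_subset_left _ _).trans hη.tsupport_subset) hzeros
    _ ≤ 2 ^ (p - 1) *
          (L ^ p * (∫⁻ x in U, ‖w x - a‖ₑ ^ p) + ∫⁻ x in U, ‖fderiv ℝ w x‖ₑ ^ p) := by
        simpa only [fderiv_sub_const] using
          hη.lintegral_enorm_fderiv_smul_rpow_le hp hU (hwa.differentiableOn one_ne_zero)

theorem pCapacity_zeros_mul_lintegral_le (hp : 1 ≤ p) (hU : IsOpen U) (hUc : Convex ℝ U)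
    (hη : IsCutoff η S U L) (hw : ContDiffOn ℝ 1 w U) :
    pCapacity n p {x ∈ S | w x = 0} U * ∫⁻ x in U, ‖w x‖ₑ ^ p ≤
      2 ^ (p - 1) * (2 ^ n * (L * ediam U) ^ p + 1) * volume U *
        ∫⁻ x in U, ‖fderiv ℝ w x‖ₑ ^ p := by
  have hp0 : 0 ≤ p := by linarith
  set I : ℝ≥0∞ := ∫⁻ x in U, ‖fderiv ℝ w x‖ₑ ^ p
  calc pCapacity n p {x ∈ S | w x = 0} U * ∫⁻ y in U, ‖w y‖ₑ ^ p
      ≤ ∫⁻ y in U, pCapacity n p {x ∈ S | w x = 0} U * ‖w y‖ₑ ^ p := lintegral_const_mul_le _ _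
    _ ≤ ∫⁻ y in U, 2 ^ (p - 1) * (L ^ p * (∫⁻ x in U, ‖w x - w y‖ₑ ^ p) + I) :=
        lintegral_mono fun y => pCapacity_zeros_mul_enorm_rpow_le hp hU hη hw (w y)
    _ = 2 ^ (p - 1) *
          (L ^ p * (∫⁻ y in U, ∫⁻ x in U, ‖w x - w y‖ₑ ^ p) + I * volume U) := by
        rw [lintegral_const_mul' _ _ (by finiteness), lintegral_add_right _ measurable_const,
          lintegral_const_mul' _ _ (by finiteness), setLIntegral_const]
    _ ≤ 2 ^ (p - 1) * (L ^ p * (2 ^ n * ediam U ^ p * volume U * I) + I * volume U) := by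
        gcongr
        simpa only [finrank_euclideanSpace_fin] using
          lintegral_lintegral_enorm_sub_rpow_le_of_convex (μ := volume) hp hUc hU hw
    _ = 2 ^ (p - 1) * (2 ^ n * (L * ediam U) ^ p + 1) * volume U * I := by
        rw [ENNReal.mul_rpow_of_nonneg _ _ hp0]
        ring

theorem exists_pCapacity_zeros_closedBall_mul_lintegral_le (n : ℕ) (hp : 1 ≤ p) :
    ∃ C : ℝ≥0∞, C ≠ 0 ∧ C ≠ ⊤ ∧
      ∀ (x₀ : EuclideanSpace ℝ (Fin n)) {ρ : ℝ}, 0 < ρ →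
      ∀ {w : EuclideanSpace ℝ (Fin n) → ℝ}, ContDiffOn ℝ 1 w (ball x₀ (2 * ρ)) →
        pCapacity n p {x ∈ closedBall x₀ ρ | w x = 0} (ball x₀ (2 * ρ)) *
            ∫⁻ x in ball x₀ (2 * ρ), ‖w x‖ₑ ^ p ≤
          C * volume (ball x₀ (2 * ρ)) * ∫⁻ x in ball x₀ (2 * ρ), ‖fderiv ℝ w x‖ₑ ^ p := by
  have hp0 : 0 ≤ p := by linarith
  obtain ⟨M, hM⟩ := exists_isCutoff_closedBall_ball (EuclideanSpace ℝ (Fin n))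
  refine ⟨2 ^ (p - 1) * (2 ^ n * (4 * M) ^ p + 1),
    mul_ne_zero (ENNReal.rpow_pos two_pos (by simp)).ne' (by simp), by finiteness,
    fun x₀ ρ hρ w hw => ?_⟩
  obtain ⟨η, hη⟩ := hM x₀ hρ
  have hdiam : ((M / ρ.toNNReal : ℝ≥0) : ℝ≥0∞) * ediam (ball x₀ (2 * ρ)) ≤ 4 * M := by
    calc ((M / ρ.toNNReal : ℝ≥0) : ℝ≥0∞) * ediam (ball x₀ (2 * ρ))
        ≤ (M / ρ.toNNReal : ℝ≥0) * (2 * ENNReal.ofReal (2 * ρ)) := by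
          gcongr
          rw [← eball_ofReal]
          exact ediam_eball_le
      _ = 4 * M := by
          have hρ' : ρ.toNNReal ≠ 0 := (Real.toNNReal_pos.2 hρ).ne'
          rw [ENNReal.ofReal, Real.toNNReal_mul zero_le_two, Real.toNNReal_ofNat]
          norm_cast
          field_simp
          norm_num
  refine (pCapacity_zeros_mul_lintegral_le hp isOpen_ball (convex_ball _ _) hη hw).trans ?_
  gcongr

end Capacitary

theorem capacitary_poincare_general (n : ℕ) (p : ℝ) (hp : 1 ≤ p) :
    ∃ c : ℝ, 0 < c ∧
      ∀ (x₀ : EuclideanSpace ℝ (Fin n)) (ρ : ℝ), 0 < ρ →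
      ∀ w : EuclideanSpace ℝ (Fin n) → ℝ, ContDiffOn ℝ 1 w (Metric.ball x₀ (2 * ρ)) →
        pCapacity n p {x ∈ Metric.closedBall x₀ ρ | w x = 0} (Metric.ball x₀ (2 * ρ)) *
            ((volume (Metric.ball x₀ (2 * ρ)))⁻¹ *
              ∫⁻ x in Metric.ball x₀ (2 * ρ), ENNReal.ofReal (|w x| ^ p)) ≤
          ENNReal.ofReal c *
            ∫⁻ x in Metric.ball x₀ (2 * ρ), ENNReal.ofReal (‖fderiv ℝ w x‖ ^ p) := by
  have hp0 : 0 ≤ p := by linarith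
  obtain ⟨C, hC0, hC_top, hC⟩ := exists_pCapacity_zeros_closedBall_mul_lintegral_le n hp
  refine ⟨C.toReal, ENNReal.toReal_pos hC0 hC_top, fun x₀ ρ hρ w hw => ?_⟩
  simp only [← Real.norm_eq_abs, ofReal_norm_rpow _ hp0, ENNReal.ofReal_toReal hC_top]
  rw [mul_left_comm]
  refine (mul_le_mul_right (hC x₀ hρ hw) _).trans_eq ?_
  rw [mul_comm C, mul_assoc, ENNReal.inv_mul_cancel_left
    (Metric.measure_ball_pos _ _ (by positivity)).ne' measure_ball_lt_top.ne]

/-- **capacitary Poincaré inequality.** For `1 < p < ∞` there is `c = c(n,p)`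
such that for every `C¹` function `w : ℝⁿ → ℝ`, with `K_ρ(w) = {x ∈ B̄(x₀,ρ) : w x = 0}`,
`cap_p(K_ρ(w), B(x₀,2ρ)) · ⨍_{B(x₀,2ρ)} |w|^p ≤ c ∫_{B(x₀,2ρ)} |Dw|^p`. -/
theorem capacitary_poincare (n : ℕ) (hn : 2 ≤ n) (p : ℝ) (hp : 1 < p) :
    ∃ c : ℝ, 0 < c ∧
      ∀ (x₀ : EuclideanSpace ℝ (Fin n)) (ρ : ℝ), 0 < ρ →
      ∀ w : EuclideanSpace ℝ (Fin n) → ℝ, ContDiff ℝ 1 w →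
        pCapacity n p {x ∈ Metric.closedBall x₀ ρ | w x = 0} (Metric.ball x₀ (2 * ρ)) *
            ((volume (Metric.ball x₀ (2 * ρ)))⁻¹ *
              ∫⁻ x in Metric.ball x₀ (2 * ρ), ENNReal.ofReal (|w x| ^ p)) ≤
          ENNReal.ofReal c *
            ∫⁻ x in Metric.ball x₀ (2 * ρ), ENNReal.ofReal (‖fderiv ℝ w x‖ ^ p) := by
  obtain ⟨c, hc, h⟩ := capacitary_poincare_general n p hp.le
  exact ⟨c, hc, fun x₀ ρ hρ w hw => h x₀ ρ hρ w hw.contDiffOn⟩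
end
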